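/- Suppose w ≡ 0 and w̄ ≡ 0, x₀ = x̄₀ ∈ ℝⁿ, and r̄(0) and θ(0) have the same distribution on 𝔛. Then E[‖x(k)‖²] = E[‖x̄(k)‖²] for every k ≥ 0, where ‖·‖ is the Euclidean norm on ℝⁿ. -/

import Mathlib

open MeasureTheory ProbabilityTheory Matrix

noncomputable section

/-- The state space `[N] × [M] × [N] × [T]` of the extended process `r̄`.
`Fin N`, `Fin M`, `Fin T` play the roles of `[N] = {1,…,N}`, `[M]`, `[T]`
(with `Fin T` being the 0-indexed version of `[T] = {1,…,T}`, i.e. `δ ∈ [T]`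
corresponds to `δ - 1 : Fin T`). -/
abbrev XT (NN MM T : ℕ) : Type := Fin NN × Fin MM × Fin NN × Fin T

/-- `X` is a time-homogeneous Markov chain with transition probability matrix `P`:
for every `k`, every state `j` and every sequence of states `i`,
`Pr(X(k+1) = j ∧ X(l) = i l for all l ≤ k) = P (i k) j * Pr(X(l) = i l for all l ≤ k)`. -/
def IsMarkovChain {Ω : Type} {_mΩ : MeasurableSpace Ω} (μ : Measure Ω) {S : Type}
    (X : ℕ → Ω → S) (P : S → S → ℝ) : Prop :=
  ∀ (k : ℕ) (j : S) (i : ℕ → S),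
    (μ {ω | X (k + 1) ω = j ∧ ∀ l ≤ k, X l ω = i l}).toReal
      = P (i k) j * (μ {ω | ∀ l ≤ k, X l ω = i l}).toReal

/-- `⌊m⌋_T`, the unique element of `{0,…,T-1}` congruent to `m` modulo `T`, as `Fin T`. -/
def intToFin (T : ℕ) [NeZero T] (a : ℤ) : Fin T :=
  ⟨(a % (T : ℤ)).toNat, by
    have hT : 0 < (T : ℤ) := by
      exact_mod_cast Nat.pos_of_ne_zero (NeZero.ne T)
    have h1 : 0 ≤ a % (T : ℤ) := Int.emod_nonneg a (by omega)
    have h2 : a % (T : ℤ) < (T : ℤ) := Int.emod_lt_of_pos a hT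
    omega⟩

-- `τ(k)`: the most recent observation time `≤ k` (i.e. the largest `j ≤ k` with
-- `f(s(j)) = 1`), or `τ₀` if no observation has occurred up to time `k` (`k < t₀`).
open Classical in
def tauZ {Ω : Type} {MM : ℕ} (s : ℕ → Ω → Fin MM) (f : Fin MM → Bool)
    (τ₀ : ℤ) (k : ℕ) (ω : Ω) : ℤ :=
  if ∃ j ≤ k, f (s j ω) = true
  then ((Nat.findGreatest (fun j => f (s j ω) = true) k : ℕ) : ℤ)
  else τ₀

-- `σ(k) = r(τ(k))` if an observation occurred by time `k` (i.e. `k ≥ t₀`), else `σ₀`.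
open Classical in
def sigmaProc {Ω : Type} {NN MM : ℕ} (r : ℕ → Ω → Fin NN) (s : ℕ → Ω → Fin MM)
    (f : Fin MM → Bool) (σ₀ : Fin NN) (k : ℕ) (ω : Ω) : Fin NN :=
  if ∃ j ≤ k, f (s j ω) = true
  then r (Nat.findGreatest (fun j => f (s j ω) = true) k) ω
  else σ₀

/-- `ρ(k) = ⌊k - τ(k)⌋_T + 1 ∈ [T]`, represented 0-indexed as `⌊k - τ(k)⌋_T : Fin T`. -/
def rhoProc {Ω : Type} {MM T : ℕ} [NeZero T] (s : ℕ → Ω → Fin MM) (f : Fin MM → Bool)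
    (τ₀ : ℤ) (k : ℕ) (ω : Ω) : Fin T :=
  intToFin T ((k : ℤ) - tauZ s f τ₀ k ω)

/-- The extended process `r̄(k) = (r(k), s(k), σ(k), ρ(k))`. -/
def rbarProc {Ω : Type} {NN MM T : ℕ} [NeZero T] (r : ℕ → Ω → Fin NN)
    (s : ℕ → Ω → Fin MM) (f : Fin MM → Bool) (τ₀ : ℤ) (σ₀ : Fin NN)
    (k : ℕ) (ω : Ω) : XT NN MM T :=
  (r k ω, s k ω, sigmaProc r s f σ₀ k ω, rhoProc s f τ₀ k ω)

/-- Membership in `𝔛`: if `f(β) = 1` then `α = γ` and `δ = 1` (0-indexed: `δ = 0`). -/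
def inX {NN MM T : ℕ} [NeZero T] (f : Fin MM → Bool) (χ : XT NN MM T) : Prop :=
  f χ.2.1 = true → χ.1 = χ.2.2.1 ∧ χ.2.2.2 = 0

/-- The transition probabilities `p̄_{χχ'}` of the extended chain. The condition
`⌊δ' - δ - 1⌋_T = 0` for `δ, δ' ∈ [T]` is, in 0-indexed form, `δ' = δ + 1` in `Fin T`. -/
def pbar {NN MM T : ℕ} [NeZero T] (P : Matrix (Fin NN) (Fin NN) ℝ)
    (Q : Matrix (Fin MM) (Fin MM) ℝ) (f : Fin MM → Bool) (χ χ' : XT NN MM T) : ℝ :=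
  (if f χ'.2.1 = true
    then (if χ'.1 = χ'.2.2.1 ∧ χ'.2.2.2 = 0 then (1 : ℝ) else 0)
    else (if χ'.2.2.1 = χ.2.2.1 ∧ χ'.2.2.2 = χ.2.2.2 + 1 then (1 : ℝ) else 0))
  * P χ.1 χ'.1 * Q χ.2.1 χ'.2.1

/-- The state trajectory of the closed-loop system
`x(k+1) = A(mode(k)) x(k) + E(mode(k)) w(k)`, `x(0) = x₀`. -/
def traj {Ω S : Type} {n q : ℕ}
    (Amat : S → Matrix (Fin n) (Fin n) ℝ) (Emat : S → Matrix (Fin n) (Fin q) ℝ)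
    (mode : ℕ → Ω → S) (w : ℕ → Ω → Fin q → ℝ) (x0 : Fin n → ℝ) : ℕ → Ω → Fin n → ℝ
  | 0, _ => x0
  | (k + 1), ω =>
      (Amat (mode k ω)).mulVec (traj Amat Emat mode w x0 k ω)
        + (Emat (mode k ω)).mulVec (w k ω)

/-- `A_{K,χ} = A_α + B_α K_{γ,δ}`. -/
def AKmat {NN MM T n m : ℕ} (A : Fin NN → Matrix (Fin n) (Fin n) ℝ)
    (B : Fin NN → Matrix (Fin n) (Fin m) ℝ)
    (K : Fin NN → Fin T → Matrix (Fin m) (Fin n) ℝ) (χ : XT NN MM T) :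
    Matrix (Fin n) (Fin n) ℝ :=
  A χ.1 + B χ.1 * K χ.2.2.1 χ.2.2.2

/-- `C_{K,χ} = C_α + D_α K_{γ,δ}`. -/
def CKmat {NN MM T n m ℓ : ℕ} (C : Fin NN → Matrix (Fin ℓ) (Fin n) ℝ)
    (D : Fin NN → Matrix (Fin ℓ) (Fin m) ℝ)
    (K : Fin NN → Fin T → Matrix (Fin m) (Fin n) ℝ) (χ : XT NN MM T) :
    Matrix (Fin ℓ) (Fin n) ℝ :=
  C χ.1 + D χ.1 * K χ.2.2.1 χ.2.2.2

/-- Squared Euclidean norm of a vector, as an extended nonnegative real. -/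
def sqE {d : ℕ} (v : Fin d → ℝ) : ENNReal := ENNReal.ofReal (∑ i, (v i) ^ 2)

-- The operator `D̄_χ(R) = ∑_{χ' ∈ 𝔛} p̄_{χ'χ} R_{χ'}`.
open Classical in
def Dop {NN MM T n : ℕ} [NeZero T] (P : Matrix (Fin NN) (Fin NN) ℝ)
    (Q : Matrix (Fin MM) (Fin MM) ℝ) (f : Fin MM → Bool)
    (R : XT NN MM T → Matrix (Fin n) (Fin n) ℝ) (χ : XT NN MM T) :
    Matrix (Fin n) (Fin n) ℝ :=
  ∑ χ' : XT NN MM T, if inX f χ' then pbar P Q f χ' χ • R χ' else 0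

-- The operator `F̄_χ(Z) = ∑_{χ' ∈ 𝔛} p̄_{χχ'} Z_{χ,χ'}`.
open Classical in
def Fop {NN MM T n : ℕ} [NeZero T] (P : Matrix (Fin NN) (Fin NN) ℝ)
    (Q : Matrix (Fin MM) (Fin MM) ℝ) (f : Fin MM → Bool)
    (Z : XT NN MM T → XT NN MM T → Matrix (Fin n) (Fin n) ℝ) (χ : XT NN MM T) :
    Matrix (Fin n) (Fin n) ℝ :=
  ∑ χ' : XT NN MM T, if inX f χ' then pbar P Q f χ χ' • Z χ χ' else 0

/-- A pair `(γ,δ) ∈ [N] × [T]` is admissible if `(α,β,γ,δ) ∈ 𝔛` for some `α, β`. -/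
def Admissible {NN MM T : ℕ} [NeZero T] (f : Fin MM → Bool) (g : Fin NN) (d : Fin T) : Prop :=
  ∃ (α : Fin NN) (β : Fin MM), inX (T := T) f (α, β, g, d)

/-- A realization, on some probability space, of the pair of independent
time-homogeneous Markov chains `(r, s)` with transition matrices `P` and `Q`. -/
structure MJLSReal (NN MM : ℕ) (P : Matrix (Fin NN) (Fin NN) ℝ)
    (Q : Matrix (Fin MM) (Fin MM) ℝ) : Type 1 where
  Ω : Type
  inst : MeasurableSpace Ω
  μ : @Measure Ω inst
  prob : IsProbabilityMeasure μ
  r : ℕ → Ω → Fin NN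
  s : ℕ → Ω → Fin MM
  meas_r : ∀ k, Measurable[inst] (r k)
  meas_s : ∀ k, Measurable[inst] (s k)
  markov_r : IsMarkovChain μ r fun i j => P i j
  markov_s : IsMarkovChain μ s fun i j => Q i j
  indep : IndepFun (fun ω l => r l ω) (fun ω l => s l ω) μ

/-- A realization, on some probability space, of a time-homogeneous Markov chain `θ`
taking values in `𝔛` with transition probabilities `p̄`. -/
structure ThetaReal (NN MM T : ℕ) [NeZero T] (P : Matrix (Fin NN) (Fin NN) ℝ)
    (Q : Matrix (Fin MM) (Fin MM) ℝ) (f : Fin MM → Bool) : Type 1 where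
  Ω : Type
  inst : MeasurableSpace Ω
  μ : @Measure Ω inst
  prob : IsProbabilityMeasure μ
  θ : ℕ → Ω → XT NN MM T
  meas : ∀ k, Measurable[inst] (θ k)
  mem : ∀ k ω, inX f (θ k ω)
  markov : IsMarkovChain μ θ (pbar P Q f)

/-- Mean square stability of the closed-loop system `Σ_K`: there are `c > 0` and
`λ ∈ [0,1)` such that for every realization, every deterministic initialization
(`r(0) = r₀`, `s(0) = s₀` a.s., together with `σ₀` and `τ₀ ≤ 0`, so that `r̄(0)`
is a deterministic element of `𝔛`), every `x₀` and every `k`,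
`E[‖x(k)‖²] ≤ c λ^k ‖x₀‖²` (with `w ≡ 0`). -/
def MeanSquareStable {NN MM T n m q : ℕ} [NeZero T]
    (P : Matrix (Fin NN) (Fin NN) ℝ) (Qm : Matrix (Fin MM) (Fin MM) ℝ) (f : Fin MM → Bool)
    (A : Fin NN → Matrix (Fin n) (Fin n) ℝ) (B : Fin NN → Matrix (Fin n) (Fin m) ℝ)
    (E : Fin NN → Matrix (Fin n) (Fin q) ℝ)
    (K : Fin NN → Fin T → Matrix (Fin m) (Fin n) ℝ) : Prop :=
  ∃ c : ℝ, 0 < c ∧ ∃ lam : ℝ, 0 ≤ lam ∧ lam < 1 ∧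
    ∀ (S : MJLSReal NN MM P Qm) (τ₀ : ℤ), τ₀ ≤ 0 →
      ∀ (σ₀ r₀ : Fin NN) (s₀ : Fin MM),
        (∀ᵐ ω ∂S.μ, S.r 0 ω = r₀ ∧ S.s 0 ω = s₀) →
        ∀ (x0 : Fin n → ℝ) (k : ℕ),
          (∫⁻ ω, sqE (traj (AKmat A B K) (fun χ => E χ.1)
              (rbarProc S.r S.s f τ₀ σ₀) (fun _ _ => 0) x0 k ω) ∂S.μ)
            ≤ ENNReal.ofReal (c * lam ^ k * ∑ i, (x0 i) ^ 2)

/-- Mean square stability of `Σ̄_K` (the system driven by the chain `θ`). -/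
def MeanSquareStableBar {NN MM T n m q : ℕ} [NeZero T]
    (P : Matrix (Fin NN) (Fin NN) ℝ) (Qm : Matrix (Fin MM) (Fin MM) ℝ) (f : Fin MM → Bool)
    (A : Fin NN → Matrix (Fin n) (Fin n) ℝ) (B : Fin NN → Matrix (Fin n) (Fin m) ℝ)
    (E : Fin NN → Matrix (Fin n) (Fin q) ℝ)
    (K : Fin NN → Fin T → Matrix (Fin m) (Fin n) ℝ) : Prop :=
  ∃ c : ℝ, 0 < c ∧ ∃ lam : ℝ, 0 ≤ lam ∧ lam < 1 ∧
    ∀ (S : ThetaReal NN MM T P Qm f) (χ : XT NN MM T), inX f χ →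
      (∀ᵐ ω ∂S.μ, S.θ 0 ω = χ) →
      ∀ (x0 : Fin n → ℝ) (k : ℕ),
        (∫⁻ ω, sqE (traj (AKmat A B K) (fun χ' => E χ'.1) S.θ (fun _ _ => 0) x0 k ω) ∂S.μ)
          ≤ ENNReal.ofReal (c * lam ^ k * ∑ i, (x0 i) ^ 2)

/-- The impulse disturbance `w = e_i φ`, i.e. `w(0) = e_i` and `w(k) = 0` for `k ≥ 1`. -/
def impulse {Ω : Type} (q : ℕ) (i : Fin q) : ℕ → Ω → Fin q → ℝ :=
  fun k _ j => if k = 0 ∧ j = i then 1 else 0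

/-- `∑_k E[‖z(k; 0, χ, e_i φ)‖²]` for `Σ_K` on a given realization with data `(τ₀, σ₀)`. -/
def H2TermSigma {NN MM T n m q ℓ : ℕ} [NeZero T]
    {P : Matrix (Fin NN) (Fin NN) ℝ} {Qm : Matrix (Fin MM) (Fin MM) ℝ}
    (S : MJLSReal NN MM P Qm) (f : Fin MM → Bool) (τ₀ : ℤ) (σ₀ : Fin NN)
    (A : Fin NN → Matrix (Fin n) (Fin n) ℝ) (B : Fin NN → Matrix (Fin n) (Fin m) ℝ)
    (C : Fin NN → Matrix (Fin ℓ) (Fin n) ℝ) (D : Fin NN → Matrix (Fin ℓ) (Fin m) ℝ)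
    (E : Fin NN → Matrix (Fin n) (Fin q) ℝ)
    (K : Fin NN → Fin T → Matrix (Fin m) (Fin n) ℝ) (i : Fin q) : ENNReal :=
  ∑' k : ℕ, ∫⁻ ω, sqE ((CKmat C D K (rbarProc S.r S.s f τ₀ σ₀ k ω)).mulVec
      (traj (AKmat A B K) (fun χ => E χ.1) (rbarProc S.r S.s f τ₀ σ₀)
        (impulse q i) 0 k ω)) ∂S.μ

-- `‖Σ_K‖₂² < γ`, where `‖Σ_K‖₂² = ∑_{i=1}^q ∑_{χ ∈ 𝔛} μ̄(χ) ‖z(⬝;0,χ,e_iφ)‖₂²` and the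
-- expectations are over arbitrary realizations with deterministic initialization `r̄(0) = χ`.
open Classical in
def H2SqLtSigma {NN MM T n m q ℓ : ℕ} [NeZero T]
    (P : Matrix (Fin NN) (Fin NN) ℝ) (Qm : Matrix (Fin MM) (Fin MM) ℝ) (f : Fin MM → Bool)
    (A : Fin NN → Matrix (Fin n) (Fin n) ℝ) (B : Fin NN → Matrix (Fin n) (Fin m) ℝ)
    (C : Fin NN → Matrix (Fin ℓ) (Fin n) ℝ) (D : Fin NN → Matrix (Fin ℓ) (Fin m) ℝ)
    (E : Fin NN → Matrix (Fin n) (Fin q) ℝ)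
    (K : Fin NN → Fin T → Matrix (Fin m) (Fin n) ℝ)
    (μbar : XT NN MM T → ℝ) (γ : ℝ) : Prop :=
  ∀ (S : Fin q → XT NN MM T → MJLSReal NN MM P Qm)
    (τ : Fin q → XT NN MM T → ℤ) (σv : Fin q → XT NN MM T → Fin NN),
    (∀ i χ, inX f χ → τ i χ ≤ 0 ∧
        (∀ᵐ ω ∂(S i χ).μ, rbarProc (S i χ).r (S i χ).s f (τ i χ) (σv i χ) 0 ω = χ)) →
    (∑ i : Fin q, ∑ χ : XT NN MM T,
        if inX f χ
        then ENNReal.ofReal (μbar χ) * H2TermSigma (S i χ) f (τ i χ) (σv i χ) A B C D E K i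
        else 0)
      < ENNReal.ofReal γ

/-- `∑_k E[‖z̄(k; 0, χ, e_i φ)‖²]` for `Σ̄_K` on a given realization of `θ`. -/
def H2TermBar {NN MM T n m q ℓ : ℕ} [NeZero T]
    {P : Matrix (Fin NN) (Fin NN) ℝ} {Qm : Matrix (Fin MM) (Fin MM) ℝ} {f : Fin MM → Bool}
    (S : ThetaReal NN MM T P Qm f)
    (A : Fin NN → Matrix (Fin n) (Fin n) ℝ) (B : Fin NN → Matrix (Fin n) (Fin m) ℝ)
    (C : Fin NN → Matrix (Fin ℓ) (Fin n) ℝ) (D : Fin NN → Matrix (Fin ℓ) (Fin m) ℝ)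
    (E : Fin NN → Matrix (Fin n) (Fin q) ℝ)
    (K : Fin NN → Fin T → Matrix (Fin m) (Fin n) ℝ) (i : Fin q) : ENNReal :=
  ∑' k : ℕ, ∫⁻ ω, sqE ((CKmat C D K (S.θ k ω)).mulVec
      (traj (AKmat A B K) (fun χ => E χ.1) S.θ (impulse q i) 0 k ω)) ∂S.μ

-- `‖Σ̄_K‖₂² < γ` (the `H₂` norm of `Σ̄_K`, defined with `θ` in place of `r̄`).
open Classical in
def H2SqLtBar {NN MM T n m q ℓ : ℕ} [NeZero T]
    (P : Matrix (Fin NN) (Fin NN) ℝ) (Qm : Matrix (Fin MM) (Fin MM) ℝ) (f : Fin MM → Bool)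
    (A : Fin NN → Matrix (Fin n) (Fin n) ℝ) (B : Fin NN → Matrix (Fin n) (Fin m) ℝ)
    (C : Fin NN → Matrix (Fin ℓ) (Fin n) ℝ) (D : Fin NN → Matrix (Fin ℓ) (Fin m) ℝ)
    (E : Fin NN → Matrix (Fin n) (Fin q) ℝ)
    (K : Fin NN → Fin T → Matrix (Fin m) (Fin n) ℝ)
    (μbar : XT NN MM T → ℝ) (γ : ℝ) : Prop :=
  ∀ (S : Fin q → XT NN MM T → ThetaReal NN MM T P Qm f),
    (∀ i χ, inX f χ → (∀ᵐ ω ∂(S i χ).μ, (S i χ).θ 0 ω = χ)) →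
    (∑ i : Fin q, ∑ χ : XT NN MM T,
        if inX f χ
        then ENNReal.ofReal (μbar χ) * H2TermBar (S i χ) A B C D E K i
        else 0)
      < ENNReal.ofReal γ

/-- The σ-algebra `Θ_k` generated by `r(0), s(0), …, r(k), s(k)`, for a realization. -/
def sigFiltSigma {NN MM : ℕ} {P : Matrix (Fin NN) (Fin NN) ℝ}
    {Q : Matrix (Fin MM) (Fin MM) ℝ} (S : MJLSReal NN MM P Q) (k : ℕ) :
    MeasurableSpace S.Ω :=
  ⨆ j ∈ Finset.range (k + 1),
    (MeasurableSpace.comap (S.r j) inferInstance ⊔ MeasurableSpace.comap (S.s j) inferInstance)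

/-- The σ-algebra generated by `θ(0), …, θ(k)`, for a realization of `θ`. -/
def sigFiltBar {NN MM T : ℕ} [NeZero T] {P : Matrix (Fin NN) (Fin NN) ℝ}
    {Q : Matrix (Fin MM) (Fin MM) ℝ} {f : Fin MM → Bool} (S : ThetaReal NN MM T P Q f)
    (k : ℕ) : MeasurableSpace S.Ω :=
  ⨆ j ∈ Finset.range (k + 1), MeasurableSpace.comap (S.θ j) inferInstance

/-- `Σ_K` satisfies `‖Σ_K‖∞² < γ`: there is `0 ≤ c < γ` such that `‖z‖₂² ≤ c ‖w‖₂²`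
for every realization, every deterministic initialization `r̄(0) = r̄₀ ∈ 𝔛`, and
every nonzero `w ∈ ℓ²(ℝ^q)` adapted to `(Θ_k)_k` (with `x₀ = 0`). -/
def HinfSqLtSigma {NN MM T n m q ℓ : ℕ} [NeZero T]
    (P : Matrix (Fin NN) (Fin NN) ℝ) (Qm : Matrix (Fin MM) (Fin MM) ℝ) (f : Fin MM → Bool)
    (A : Fin NN → Matrix (Fin n) (Fin n) ℝ) (B : Fin NN → Matrix (Fin n) (Fin m) ℝ)
    (C : Fin NN → Matrix (Fin ℓ) (Fin n) ℝ) (D : Fin NN → Matrix (Fin ℓ) (Fin m) ℝ)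
    (E : Fin NN → Matrix (Fin n) (Fin q) ℝ)
    (K : Fin NN → Fin T → Matrix (Fin m) (Fin n) ℝ) (γ : ℝ) : Prop :=
  ∃ c : ℝ, 0 ≤ c ∧ c < γ ∧
    ∀ (S : MJLSReal NN MM P Qm) (τ₀ : ℤ), τ₀ ≤ 0 → ∀ (σ₀ : Fin NN) (χ : XT NN MM T),
      inX f χ → (∀ᵐ ω ∂S.μ, rbarProc S.r S.s f τ₀ σ₀ 0 ω = χ) →
      ∀ (w : ℕ → S.Ω → Fin q → ℝ),
        (∀ k, Measurable[sigFiltSigma S k] (w k)) →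
        0 < (∑' k : ℕ, ∫⁻ ω, sqE (w k ω) ∂S.μ) →
        (∑' k : ℕ, ∫⁻ ω, sqE (w k ω) ∂S.μ) ≠ ⊤ →
        (∑' k : ℕ, ∫⁻ ω, sqE ((CKmat C D K (rbarProc S.r S.s f τ₀ σ₀ k ω)).mulVec
            (traj (AKmat A B K) (fun χ' => E χ'.1) (rbarProc S.r S.s f τ₀ σ₀) w 0 k ω)) ∂S.μ)
          ≤ ENNReal.ofReal c * (∑' k : ℕ, ∫⁻ ω, sqE (w k ω) ∂S.μ)

/-- `Σ̄_K` satisfies `‖Σ̄_K‖∞² < γ` (disturbances adapted to the filtration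
generated by `θ`). -/
def HinfSqLtBar {NN MM T n m q ℓ : ℕ} [NeZero T]
    (P : Matrix (Fin NN) (Fin NN) ℝ) (Qm : Matrix (Fin MM) (Fin MM) ℝ) (f : Fin MM → Bool)
    (A : Fin NN → Matrix (Fin n) (Fin n) ℝ) (B : Fin NN → Matrix (Fin n) (Fin m) ℝ)
    (C : Fin NN → Matrix (Fin ℓ) (Fin n) ℝ) (D : Fin NN → Matrix (Fin ℓ) (Fin m) ℝ)
    (E : Fin NN → Matrix (Fin n) (Fin q) ℝ)
    (K : Fin NN → Fin T → Matrix (Fin m) (Fin n) ℝ) (γ : ℝ) : Prop :=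
  ∃ c : ℝ, 0 ≤ c ∧ c < γ ∧
    ∀ (S : ThetaReal NN MM T P Qm f) (χ : XT NN MM T),
      inX f χ → (∀ᵐ ω ∂S.μ, S.θ 0 ω = χ) →
      ∀ (w : ℕ → S.Ω → Fin q → ℝ),
        (∀ k, Measurable[sigFiltBar S k] (w k)) →
        0 < (∑' k : ℕ, ∫⁻ ω, sqE (w k ω) ∂S.μ) →
        (∑' k : ℕ, ∫⁻ ω, sqE (w k ω) ∂S.μ) ≠ ⊤ →
        (∑' k : ℕ, ∫⁻ ω, sqE ((CKmat C D K (S.θ k ω)).mulVec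
            (traj (AKmat A B K) (fun χ' => E χ'.1) S.θ w 0 k ω)) ∂S.μ)
          ≤ ENNReal.ofReal c * (∑' k : ℕ, ∫⁻ ω, sqE (w k ω) ∂S.μ)

/-- The symmetric 4×4 block matrix appearing in the `H∞` LMI, with diagonal blocks
`D1, γ I_q, D3, I_ℓ`, sub-diagonal blocks `(3,1) = B31`, `(3,2) = B32`, `(4,1) = B41`,
the corresponding transposed blocks above the diagonal, and zeros elsewhere. -/
def hinfBlock {n q ℓ : ℕ} (γ : ℝ) (D1 D3 : Matrix (Fin n) (Fin n) ℝ)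
    (B31 : Matrix (Fin n) (Fin n) ℝ) (B32 : Matrix (Fin n) (Fin q) ℝ)
    (B41 : Matrix (Fin ℓ) (Fin n) ℝ) :
    Matrix ((Fin n ⊕ Fin q) ⊕ (Fin n ⊕ Fin ℓ)) ((Fin n ⊕ Fin q) ⊕ (Fin n ⊕ Fin ℓ)) ℝ :=
  Matrix.fromBlocks
    (Matrix.fromBlocks D1 0 0 (γ • (1 : Matrix (Fin q) (Fin q) ℝ)))
    (Matrix.fromBlocks B31ᵀ B41ᵀ B32ᵀ 0)
    (Matrix.fromBlocks B31 B32 B41 0)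
    (Matrix.fromBlocks D3 0 0 (1 : Matrix (Fin ℓ) (Fin ℓ) ℝ))

lemma aux_intToFin_zero (T : ℕ) [NeZero T] : intToFin T 0 = 0 := by
  ext; simp [intToFin]

lemma aux_intToFin_succ (T : ℕ) [NeZero T] (a : ℤ) :
    intToFin T (a + 1) = intToFin T a + 1 := by
  have hT : 0 < (T : ℤ) := by
    exact_mod_cast Nat.pos_of_ne_zero (NeZero.ne T)
  apply Fin.ext
  rw [Fin.val_add]
  have h0 := Int.emod_nonneg a hT.ne'
  have h1 := Int.emod_nonneg (a + 1) hT.ne'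
  have e1 : (((1 : Fin T) : ℕ)) = 1 % T := by
    rw [Fin.val_one']
  rw [e1]
  simp only [intToFin]
  zify
  rw [Int.toNat_of_nonneg h0, Int.toNat_of_nonneg h1]
  simp [Int.add_emod]

/-- one-step update of the extended process -/
def auxG {NN MM T : ℕ} [NeZero T] (f : Fin MM → Bool) (c : XT NN MM T)
    (a : Fin NN) (b : Fin MM) : XT NN MM T :=
  (a, b, if f b = true then a else c.2.2.1, if f b = true then 0 else c.2.2.2 + 1)

lemma aux_exists {MM : ℕ} (g : ℕ → Fin MM) (f : Fin MM → Bool) (k : ℕ) (h : ¬ f (g (k+1)) = true) :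
    (∃ j ≤ k + 1, f (g j) = true) ↔ ∃ j ≤ k, f (g j) = true := by
  constructor
  · rintro ⟨j, hj, hf⟩
    refine ⟨j, ?_, hf⟩
    rcases Nat.lt_or_ge k j with h' | h'
    · have : j = k + 1 := by omega
      subst this; exact absurd hf h
    · exact h'
  · rintro ⟨j, hj, hf⟩
    exact ⟨j, by omega, hf⟩

lemma aux_rbar_succ {Ω : Type} {NN MM T : ℕ} [NeZero T] (r : ℕ → Ω → Fin NN)
    (s : ℕ → Ω → Fin MM) (f : Fin MM → Bool) (τ₀ : ℤ) (σ₀ : Fin NN) (k : ℕ) (ω : Ω) :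
    (rbarProc r s f τ₀ σ₀ (k + 1) ω : XT NN MM T)
      = auxG f (rbarProc r s f τ₀ σ₀ k ω) (r (k + 1) ω) (s (k + 1) ω) := by
  classical
  by_cases h : f (s (k + 1) ω) = true
  · have hex : ∃ j ≤ k + 1, f (s j ω) = true := ⟨k + 1, le_rfl, h⟩
    have hg : Nat.findGreatest (fun j => f (s j ω) = true) (k + 1) = k + 1 :=
      Nat.findGreatest_eq h
    unfold rbarProc auxG rhoProc sigmaProc tauZ
    simp only [if_pos hex, if_pos h]
    refine Prod.ext rfl (Prod.ext rfl (Prod.ext ?_ ?_))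
    · dsimp only
      congr 1
    · dsimp only
      rw [show ((k + 1 : ℕ) : ℤ) - _ = 0 from ?_, aux_intToFin_zero]
      rw [sub_eq_zero]
      congr 1
      symm
      convert hg
  · have hex := aux_exists (fun j => s j ω) f k h
    have hg : Nat.findGreatest (fun j => f (s j ω) = true) (k + 1)
        = Nat.findGreatest (fun j => f (s j ω) = true) k :=
      Nat.findGreatest_of_not h
    unfold rbarProc auxG rhoProc sigmaProc tauZ
    simp only [if_neg h]
    refine Prod.ext rfl (Prod.ext rfl (Prod.ext ?_ ?_))
    · dsimp only
      by_cases h' : ∃ j ≤ k, f (s j ω) = true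
      · rw [if_pos h', if_pos (hex.2 h')]
        congr 1
      · rw [if_neg h', if_neg (fun h2 => h' (hex.1 h2))]
    · dsimp only
      rw [← aux_intToFin_succ]
      congr 1
      by_cases h' : ∃ j ≤ k, f (s j ω) = true
      · rw [if_pos h', if_pos (hex.2 h')]
        have : (((Nat.findGreatest (fun j => f (s j ω) = true) (k + 1) : ℕ)) : ℤ)
          = ((Nat.findGreatest (fun j => f (s j ω) = true) k : ℕ) : ℤ) := by rw [hg]
        push_cast
        have h3 : ∀ a b c : ℤ, a = b → c + 1 - a = c - b + 1 := by intros; omega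
        apply h3
        convert this
      · rw [if_neg h', if_neg (fun h2 => h' (hex.1 h2))]
        push_cast; ring

lemma aux_rbar_congr {Ω : Type} {NN MM T : ℕ} [NeZero T] (r : ℕ → Ω → Fin NN)
    (s : ℕ → Ω → Fin MM) (f : Fin MM → Bool) (τ₀ : ℤ) (σ₀ : Fin NN) (k : ℕ) (ω ω' : Ω)
    (h : ∀ l ≤ k, r l ω = r l ω' ∧ s l ω = s l ω') :
    (rbarProc r s f τ₀ σ₀ k ω : XT NN MM T) = rbarProc r s f τ₀ σ₀ k ω' := by
  induction k with
  | zero =>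
    obtain ⟨h1, h2⟩ := h 0 le_rfl
    unfold rbarProc rhoProc sigmaProc tauZ
    simp [h1, h2]
  | succ k ih =>
    rw [aux_rbar_succ, aux_rbar_succ, ih (fun l hl => h l (by omega)), (h (k+1) le_rfl).1,
      (h (k+1) le_rfl).2]

lemma aux_meas {S : Type} [MeasurableSpace S] [MeasurableSingletonClass S] (k : ℕ) (i : ℕ → S) :
    MeasurableSet {p : ℕ → S | ∀ l ≤ k, p l = i l} := by
  have : {p : ℕ → S | ∀ l ≤ k, p l = i l} = ⋂ l, ⋂ (_ : l ≤ k), (fun p : ℕ → S => p l) ⁻¹' {i l} := by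
    ext; simp
  rw [this]
  exact MeasurableSet.iInter fun l => MeasurableSet.iInter fun _ =>
    measurable_pi_apply l (measurableSet_singleton _)

lemma aux_meas' {S : Type} [MeasurableSpace S] [MeasurableSingletonClass S] (k : ℕ) (j : S) (i : ℕ → S) :
    MeasurableSet {p : ℕ → S | p (k + 1) = j ∧ ∀ l ≤ k, p l = i l} := by
  have h1 : MeasurableSet ((fun p : ℕ → S => p (k + 1)) ⁻¹' {j}) :=
    measurable_pi_apply (k + 1) (measurableSet_singleton j)
  exact h1.inter (aux_meas k i)

lemma aux_rbar_markov {Ω : Type} [MeasurableSpace Ω] (μ : Measure Ω) {NN MM T : ℕ} [NeZero T]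
    (P : Matrix (Fin NN) (Fin NN) ℝ) (Q : Matrix (Fin MM) (Fin MM) ℝ)
    (r : ℕ → Ω → Fin NN) (s : ℕ → Ω → Fin MM)
    (hr : IsMarkovChain μ r fun i j => P i j) (hs : IsMarkovChain μ s fun i j => Q i j)
    (hind : IndepFun (fun ω l => r l ω) (fun ω l => s l ω) μ)
    (f : Fin MM → Bool) (τ₀ : ℤ) (σ₀ : Fin NN) :
    IsMarkovChain μ (rbarProc r s f τ₀ σ₀ : ℕ → Ω → XT NN MM T) (pbar P Q f) := by
  intro k χ i
  by_cases hne : ∃ ω0, ∀ l ≤ k, (rbarProc r s f τ₀ σ₀ l ω0 : XT NN MM T) = i l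
  swap
  · push Not at hne
    have e1 : {ω | ∀ l ≤ k, (rbarProc r s f τ₀ σ₀ l ω : XT NN MM T) = i l} = ∅ := by
      ext ω
      simp only [Set.mem_ofPred_eq, Set.mem_empty_iff_false, iff_false]
      intro h
      obtain ⟨l, hl, hh⟩ := hne ω
      exact hh (h l hl)
    have e2 : {ω | (rbarProc r s f τ₀ σ₀ (k+1) ω : XT NN MM T) = χ ∧
        ∀ l ≤ k, (rbarProc r s f τ₀ σ₀ l ω : XT NN MM T) = i l} = ∅ := by
      rw [Set.eq_empty_iff_forall_notMem] at e1 ⊢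
      exact fun ω h => e1 ω h.2
    rw [e1, e2]; simp
  obtain ⟨ω0, h0⟩ := hne
  have key : ∀ ω, (∀ l ≤ k, (rbarProc r s f τ₀ σ₀ l ω : XT NN MM T) = i l) ↔
      (∀ l ≤ k, r l ω = (i l).1) ∧ (∀ l ≤ k, s l ω = (i l).2.1) := by
    intro ω
    constructor
    · intro h
      exact ⟨fun l hl => by rw [← h l hl]; rfl, fun l hl => by rw [← h l hl]; rfl⟩
    · rintro ⟨h1, h2⟩ l hl
      rw [← h0 l hl]
      apply aux_rbar_congr
      intro l' hl'
      have hl2 := hl'.trans hl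
      rw [h1 l' hl2, h2 l' hl2, ← h0 l' hl2]
      exact ⟨rfl, rfl⟩
  have e1 : {ω | ∀ l ≤ k, (rbarProc r s f τ₀ σ₀ l ω : XT NN MM T) = i l} =
      (fun ω l => r l ω) ⁻¹' {p : ℕ → Fin NN | ∀ l ≤ k, p l = (i l).1} ∩
      (fun ω l => s l ω) ⁻¹' {p : ℕ → Fin MM | ∀ l ≤ k, p l = (i l).2.1} := by
    ext ω
    exact key ω
  rw [e1, hind.measure_inter_preimage_eq_mul _ _ (aux_meas _ _) (aux_meas _ _), ENNReal.toReal_mul]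
  have hr' := hr k χ.1 (fun l => (i l).1)
  have hs' := hs k χ.2.1 (fun l => (i l).2.1)
  by_cases hc : (if f χ.2.1 = true then χ.1 = χ.2.2.1 ∧ χ.2.2.2 = 0
      else χ.2.2.1 = (i k).2.2.1 ∧ χ.2.2.2 = (i k).2.2.2 + 1)
  · have e2 : {ω | (rbarProc r s f τ₀ σ₀ (k+1) ω : XT NN MM T) = χ ∧
        ∀ l ≤ k, (rbarProc r s f τ₀ σ₀ l ω : XT NN MM T) = i l} =
      (fun ω l => r l ω) ⁻¹' {p : ℕ → Fin NN | p (k + 1) = χ.1 ∧ ∀ l ≤ k, p l = (i l).1} ∩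
      (fun ω l => s l ω) ⁻¹' {p : ℕ → Fin MM | p (k + 1) = χ.2.1 ∧ ∀ l ≤ k, p l = (i l).2.1} := by
      ext ω
      simp only [Set.mem_ofPred_eq, Set.mem_inter_iff, Set.mem_preimage]
      constructor
      · rintro ⟨h1, h2⟩
        have := (key ω).1 h2
        exact ⟨⟨by rw [← h1]; rfl, this.1⟩, ⟨by rw [← h1]; rfl, this.2⟩⟩
      · rintro ⟨⟨h1, h2⟩, h3, h4⟩
        have h5 := (key ω).2 ⟨h2, h4⟩
        refine ⟨?_, h5⟩
        rw [aux_rbar_succ, h5 k le_rfl, h1, h3]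
        unfold auxG
        obtain ⟨a, b, c, d⟩ := χ
        dsimp only at hc ⊢
        split_ifs at hc ⊢ <;> simp [hc]
    have hp : pbar P Q f (i k) χ = P (i k).1 χ.1 * Q (i k).2.1 χ.2.1 := by
      unfold pbar
      split_ifs at hc ⊢ <;> simp_all
    rw [e2, hind.measure_inter_preimage_eq_mul _ _ (aux_meas' _ _ _) (aux_meas' _ _ _),
      ENNReal.toReal_mul, hp]
    simp only [Set.preimage_ofPred_eq]
    rw [hr', hs']
    ring
  · have e2 : {ω | (rbarProc r s f τ₀ σ₀ (k+1) ω : XT NN MM T) = χ ∧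
        ∀ l ≤ k, (rbarProc r s f τ₀ σ₀ l ω : XT NN MM T) = i l} = ∅ := by
      ext ω
      simp only [Set.mem_ofPred_eq, Set.mem_empty_iff_false, iff_false]
      rintro ⟨h1, h2⟩
      apply hc
      rw [aux_rbar_succ, h2 k le_rfl] at h1
      rw [← h1]
      unfold auxG
      dsimp only
      split_ifs <;> simp
    have hp : pbar P Q f (i k) χ = 0 := by
      unfold pbar
      split_ifs at hc ⊢ <;> simp_all
    rw [e2, hp]; simp

lemma aux_path_eq {Ω Ω' S : Type} [MeasurableSpace Ω] [MeasurableSpace Ω']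
    (μ : Measure Ω) [IsProbabilityMeasure μ] (μ' : Measure Ω') [IsProbabilityMeasure μ']
    [MeasurableSpace S] [MeasurableSingletonClass S]
    (X : ℕ → Ω → S) (Y : ℕ → Ω' → S) (p : S → S → ℝ)
    (hX0 : Measurable (X 0)) (hY0 : Measurable (Y 0))
    (hX : IsMarkovChain μ X p) (hY : IsMarkovChain μ' Y p)
    (hinit : Measure.map (X 0) μ = Measure.map (Y 0) μ') (i : ℕ → S) (k : ℕ) :
    μ {ω | ∀ l ≤ k, X l ω = i l} = μ' {ω | ∀ l ≤ k, Y l ω = i l} := by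
  induction k with
  | zero =>
    have := congrArg (fun m => m {i 0}) hinit
    simp only [Measure.map_apply hX0 (measurableSet_singleton _),
      Measure.map_apply hY0 (measurableSet_singleton _)] at this
    simpa [Set.preimage] using this
  | succ k ih =>
    have h1 := hX k (i (k+1)) i
    have h2 := hY k (i (k+1)) i
    rw [ih, ← h2] at h1
    have h3 := (ENNReal.toReal_eq_toReal_iff' (measure_ne_top _ _) (measure_ne_top _ _)).1 h1
    have e : ∀ (U : Type) (Z : ℕ → U → S), {ω | ∀ l ≤ k + 1, Z l ω = i l}
        = {ω | Z (k+1) ω = i (k+1) ∧ ∀ l ≤ k, Z l ω = i l} := by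
      intro U Z
      ext ω
      constructor
      · intro h; exact ⟨h _ le_rfl, fun l hl => h l (by omega)⟩
      · rintro ⟨h, h'⟩ l hl
        rcases Nat.lt_or_ge k l with h4 | h4
        · have : l = k + 1 := by omega
          subst this; exact h
        · exact h' l h4
    rw [e, e]; exact h3

lemma aux_traj_congr {Ω Ω' S : Type} {n q : ℕ}
    (Amat : S → Matrix (Fin n) (Fin n) ℝ) (Emat : S → Matrix (Fin n) (Fin q) ℝ)
    (X : ℕ → Ω → S) (Y : ℕ → Ω' → S) (x0 : Fin n → ℝ) (k : ℕ) (ω : Ω) (ω' : Ω')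
    (h : ∀ l < k, X l ω = Y l ω') :
    traj Amat Emat X (fun _ _ => 0) x0 k ω = traj Amat Emat Y (fun _ _ => 0) x0 k ω' := by
  induction k with
  | zero => rfl
  | succ k ih =>
    simp only [traj]
    rw [ih (fun l hl => h l (by omega)), h k (by omega)]

lemma aux_lintegral {Ω S : Type} [MeasurableSpace Ω] (μ : Measure Ω)
    [MeasurableSpace S] [MeasurableSingletonClass S] [Fintype S] {n q : ℕ}
    (Amat : S → Matrix (Fin n) (Fin n) ℝ) (Emat : S → Matrix (Fin n) (Fin q) ℝ)
    (X : ℕ → Ω → S) (hX : ∀ k, Measurable (X k)) (x0 : Fin n → ℝ) (k : ℕ) :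
    ∫⁻ ω, sqE (traj Amat Emat X (fun _ _ => 0) x0 k ω) ∂μ
      = ∑ p : Fin (k+1) → S,
        sqE (traj Amat Emat (fun l (p : Fin (k+1) → S) => p (Fin.ofNat (k+1) l))
          (fun _ _ => 0) x0 k p) * μ {ω | ∀ l ≤ k, X l ω = p (Fin.ofNat (k+1) l)} := by
  have hm : Measurable (fun ω (l : Fin (k+1)) => X l ω) :=
    measurable_pi_lambda _ fun l => hX l
  set F : (Fin (k+1) → S) → ENNReal := fun p =>
    sqE (traj Amat Emat (fun l (p : Fin (k+1) → S) => p (Fin.ofNat (k+1) l))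
          (fun _ _ => 0) x0 k p) with hF
  have e : ∀ ω, sqE (traj Amat Emat X (fun _ _ => 0) x0 k ω) = F (fun l : Fin (k+1) => X l ω) := by
    intro ω
    rw [hF]
    congr 1
    apply aux_traj_congr
    intro l hl
    simp [Nat.mod_eq_of_lt (show l < k + 1 by omega)]
  simp_rw [e]
  have hFm : Measurable F := measurable_of_finite F
  rw [← lintegral_map hFm hm, lintegral_fintype]
  refine Finset.sum_congr rfl fun p _ => ?_
  rw [Measure.map_apply hm (measurableSet_singleton _)]
  congr 2
  ext ω
  simp only [Set.mem_preimage, Set.mem_singleton_iff, Set.mem_ofPred_eq]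
  constructor
  · rintro h l hl
    rw [← h]
    simp [Nat.mod_eq_of_lt (show l < k + 1 by omega)]
  · intro h
    ext l
    rw [h l (by omega)]
    simp

lemma aux_rbar_meas {Ω : Type} [MeasurableSpace Ω] {NN MM T : ℕ} [NeZero T]
    (r : ℕ → Ω → Fin NN) (s : ℕ → Ω → Fin MM)
    (hmr : ∀ k, Measurable (r k)) (hms : ∀ k, Measurable (s k))
    (f : Fin MM → Bool) (τ₀ : ℤ) (σ₀ : Fin NN) (k : ℕ) :
    Measurable (rbarProc r s f τ₀ σ₀ k : Ω → XT NN MM T) := by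
  induction k with
  | zero =>
    classical
    have : (rbarProc r s f τ₀ σ₀ 0 : Ω → XT NN MM T) = 
        (fun ab : Fin NN × Fin MM => ((ab.1, ab.2, if f ab.2 = true then ab.1 else σ₀,
          intToFin T (0 - if f ab.2 = true then 0 else τ₀)) : XT NN MM T)) ∘
        fun ω => (r 0 ω, s 0 ω) := by
      ext1 ω
      unfold rbarProc rhoProc sigmaProc tauZ
      simp
    rw [this]
    exact (measurable_of_finite _).comp ((hmr 0).prodMk (hms 0))
  | succ k ih =>
    have : (rbarProc r s f τ₀ σ₀ (k+1) : Ω → XT NN MM T) = 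
        (fun c : XT NN MM T × Fin NN × Fin MM => auxG f c.1 c.2.1 c.2.2) ∘
        fun ω => (rbarProc r s f τ₀ σ₀ k ω, r (k+1) ω, s (k+1) ω) := by
      ext1 ω
      exact aux_rbar_succ ..
    rw [this]
    exact (measurable_of_finite _).comp (ih.prodMk ((hmr _).prodMk (hms _)))

/-- with `w ≡ 0`, `w̄ ≡ 0`, `x₀ = x̄₀`, and identically distributed
initial modes `r̄(0)` and `θ(0)`, one has `E[‖x(k)‖²] = E[‖x̄(k)‖²]` for all `k`. -/
theorem second_moment_eq
    {Ω Ω' : Type} [MeasurableSpace Ω] [MeasurableSpace Ω']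
    (μ : Measure Ω) [IsProbabilityMeasure μ] (μ' : Measure Ω') [IsProbabilityMeasure μ']
    {NN MM T n m q : ℕ} [NeZero NN] [NeZero MM] [NeZero T]
    [NeZero n] [NeZero m] [NeZero q]
    (P : Matrix (Fin NN) (Fin NN) ℝ) (Q : Matrix (Fin MM) (Fin MM) ℝ)
    (hP0 : ∀ i j, 0 ≤ P i j) (hP1 : ∀ i, ∑ j, P i j = 1)
    (hQ0 : ∀ i j, 0 ≤ Q i j) (hQ1 : ∀ i, ∑ j, Q i j = 1)
    (r : ℕ → Ω → Fin NN) (s : ℕ → Ω → Fin MM)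
    (hmr : ∀ k, Measurable (r k)) (hms : ∀ k, Measurable (s k))
    (hr : IsMarkovChain μ r fun i j => P i j) (hs : IsMarkovChain μ s fun i j => Q i j)
    (hind : IndepFun (fun ω l => r l ω) (fun ω l => s l ω) μ)
    (f : Fin MM → Bool) (τ₀ : ℤ) (hτ₀ : τ₀ ≤ 0) (σ₀ : Fin NN)
    (θ : ℕ → Ω' → XT NN MM T) (hmθ : ∀ k, Measurable (θ k))
    (hθX : ∀ k ω', inX f (θ k ω')) (hθ : IsMarkovChain μ' θ (pbar P Q f))
    (A : Fin NN → Matrix (Fin n) (Fin n) ℝ) (B : Fin NN → Matrix (Fin n) (Fin m) ℝ)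
    (E : Fin NN → Matrix (Fin n) (Fin q) ℝ)
    (K : Fin NN → Fin T → Matrix (Fin m) (Fin n) ℝ)
    (x0 : Fin n → ℝ)
    (hinit : Measure.map (rbarProc r s f τ₀ σ₀ 0) μ = Measure.map (θ 0) μ') :
    ∀ k : ℕ,
      (∫⁻ ω, sqE (traj (AKmat A B K) (fun χ => E χ.1) (rbarProc r s f τ₀ σ₀)
          (fun _ _ => 0) x0 k ω) ∂μ)
        = ∫⁻ ω', sqE (traj (AKmat A B K) (fun χ => E χ.1) θ
            (fun _ _ => 0) x0 k ω') ∂μ' := by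
  intro k
  have hm := aux_rbar_meas (T := T) r s hmr hms f τ₀ σ₀
  rw [aux_lintegral μ _ _ _ hm, aux_lintegral μ' _ _ _ hmθ]
  refine Finset.sum_congr rfl fun p _ => ?_
  congr 1
  exact aux_path_eq μ μ' _ _ _ (hm 0) (hmθ 0)
    (aux_rbar_markov μ P Q r s hr hs hind f τ₀ σ₀) hθ hinit
    (fun l => p (Fin.ofNat (k+1) l)) k

end
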